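/- arXiv:1907.07089 — 7 statements merged into one kernel-verified Lean document; each statement's English description precedes it below -/
import Mathlib

section
/- Let A = (a_ij) and B = (b_ij) be real n×n matrices such that a_ii < 0 for all i; b_ii < 0 for all i and b_ij = 0 for all i ≠ j (so B is a negative diagonal matrix); and A is negative diagonally dominant, i.e., there exist positive reals m_1, …, m_n with m_i·|a_ii| > Σ_{j≠i} m_j·|a_ij| for every i. Then the 2n×2n block matrix C = [[A, B], [I_n, 0]] is multiplicative D-stable: for every 2n×2n positive diagonal matrix D, the matrix D·C is Hurwitz stable. -/
open Matrix

/-- The spectrum of a real square matrix, viewed as a subset of `ℂ`: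
the set of complex roots of its characteristic polynomial. -/
def spec {m : Type*} [Fintype m] [DecidableEq m] (M : Matrix m m ℝ) : Set ℂ :=
  spectrum ℂ (M.map (Complex.ofReal ·))

/-- A real square matrix is Hurwitz stable if every eigenvalue has negative real part. -/
def HurwitzStable {m : Type*} [Fintype m] [DecidableEq m] (M : Matrix m m ℝ) : Prop :=
  ∀ z ∈ spec M, z.re < 0

/-!
Scaling the rows of `[[A, B], [E, 0]]`, with `B` and `E` diagonal, by positive factors yields a
matrix of the same kind, so it suffices to show that such a matrix is Hurwitz stable when
`B i i * E i i < 0`. For `z ≠ 0`, the Schur complement of the lower right block of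
`z - [[A, B], [E, 0]]` is `W - A`, where `W` is the diagonal matrix with entries
`z - B i i * E i i / z`. If `0 ≤ re z`, these entries have nonnegative real part, so `W - A`
inherits the strict (weighted) diagonal dominance of `A` and is nonsingular. The remaining
value `z = 0` is excluded because `B` and `E` are invertible.
-/

section BlockDeterminant

variable {ι κ : Type*} [Fintype ι] [DecidableEq ι] [Fintype κ] [DecidableEq κ]

theorem det_fromBlocks_zero₂₂_ne_zero {R : Type*} [CommRing R] [NoZeroDivisors R]
    (A : Matrix ι ι R) {B C : Matrix ι ι R} (hB : B.det ≠ 0) (hC : C.det ≠ 0) :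
    (fromBlocks A B C 0).det ≠ 0 := by
  have hswap : fromBlocks A B C 0 * fromBlocks 0 1 1 0 = fromBlocks B A 0 C := by
    simp [fromBlocks_multiply]
  refine left_ne_zero_of_mul (b := (fromBlocks 0 1 1 0 : Matrix (ι ⊕ ι) (ι ⊕ ι) R).det) ?_
  rw [← det_mul, hswap, det_fromBlocks_zero₂₁]
  exact mul_ne_zero hB hC

theorem det_fromBlocks_scalar₂₂_ne_zero {K : Type*} [Field K] {A : Matrix ι ι K}
    {B : Matrix ι κ K} {C : Matrix κ ι K} {z : K} (hz : z ≠ 0) (h : (A - z⁻¹ • (B * C)).det ≠ 0) :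
    (fromBlocks A B C (scalar κ z)).det ≠ 0 := by
  let : Invertible (scalar κ z) := (invertibleOfNonzero hz).map (scalar κ)
  have hinv : ⅟(scalar κ z) = z⁻¹ • 1 :=
    invOf_eq_right_inv (by simp [← smul_one_eq_diagonal, smul_smul, hz])
  rw [det_fromBlocks₂₂, hinv, Matrix.mul_smul, Matrix.mul_one, Matrix.smul_mul]
  exact mul_ne_zero (isUnit_det_of_invertible _).ne_zero h

end BlockDeterminant

section DiagonalDominance

variable {ι : Type*} [Fintype ι] [DecidableEq ι]

theorem det_ne_zero_of_weighted_sum_row_lt_diag {K : Type*} [NormedField K] {M : Matrix ι ι K}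
    (w : ι → K) (h : ∀ i, ∑ j ∈ Finset.univ.erase i, ‖w j‖ * ‖M i j‖ < ‖w i‖ * ‖M i i‖) :
    M.det ≠ 0 := by
  refine left_ne_zero_of_mul (b := (diagonal w).det) ?_
  rw [← det_mul]
  refine det_ne_zero_of_sum_row_lt_diag fun i => ?_
  simpa only [mul_diagonal, norm_mul, mul_comm] using h i

/-- A real matrix is *negative diagonally dominant* if its diagonal is negative and it is strictly
row diagonally dominant after its columns are scaled by some positive weights `m`. -/
def IsNegDiagDominant (A : Matrix ι ι ℝ) : Prop :=
  (∀ i, A i i < 0) ∧ ∃ m : ι → ℝ, (∀ i, 0 < m i) ∧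
    ∀ i, (∑ j ∈ Finset.univ.erase i, m j * |A i j|) < m i * |A i i|

namespace IsNegDiagDominant

variable {A : Matrix ι ι ℝ}

theorem diagonal_mul (hA : IsNegDiagDominant A) {d : ι → ℝ} (hd : ∀ i, 0 < d i) :
    IsNegDiagDominant (diagonal d * A) := by
  obtain ⟨hneg, m, hm, hdom⟩ := hA
  refine ⟨fun i => ?_, m, hm, fun i => ?_⟩
  · rw [Matrix.diagonal_mul]
    exact mul_neg_of_pos_of_neg (hd i) (hneg i)
  · simpa only [Matrix.diagonal_mul, abs_mul, abs_of_pos (hd i), mul_left_comm _ (d i),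
      ← Finset.mul_sum] using mul_lt_mul_of_pos_left (hdom i) (hd i)

theorem det_diagonal_sub_ne_zero (hA : IsNegDiagDominant A) {w : ι → ℂ}
    (hw : ∀ i, 0 ≤ (w i).re) : (diagonal w - A.map (Complex.ofReal ·)).det ≠ 0 := by
  obtain ⟨hneg, m, hm, hdom⟩ := hA
  have hdiag (i : ι) : |A i i| ≤ ‖w i - A i i‖ := calc
    |A i i| = -A i i := abs_of_neg (hneg i)
    _ ≤ (w i - A i i).re := by simpa using hw i
    _ ≤ ‖w i - A i i‖ := Complex.re_le_norm _
  have hoff (i : ι) : ∑ j ∈ Finset.univ.erase i,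
      ‖(m j : ℂ)‖ * ‖(diagonal w - A.map (Complex.ofReal ·)) i j‖ =
        ∑ j ∈ Finset.univ.erase i, m j * |A i j| :=
    Finset.sum_congr rfl fun j hj => by
      simp [diagonal_apply_ne' _ (Finset.ne_of_mem_erase hj), abs_of_pos (hm j)]
  refine det_ne_zero_of_weighted_sum_row_lt_diag (fun i => (m i : ℂ)) fun i => ?_
  calc
    _ = ∑ j ∈ Finset.univ.erase i, m j * |A i j| := hoff i
    _ < m i * |A i i| := hdom i
    _ ≤ m i * ‖w i - A i i‖ := mul_le_mul_of_nonneg_left (hdiag i) (hm i).le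
    _ = _ := by simp [abs_of_pos (hm i)]

end IsNegDiagDominant

end DiagonalDominance

section Stability

variable {ι : Type*} [Fintype ι] [DecidableEq ι]

theorem hurwitzStable_iff_det_ne_zero {M : Matrix ι ι ℝ} :
    HurwitzStable M ↔
      ∀ z : ℂ, 0 ≤ z.re → (scalar ι z - M.map (Complex.ofReal ·)).det ≠ 0 := by
  refine forall_congr' fun z => ?_
  rw [spec, mem_spectrum_iff_isRoot_charpoly, Polynomial.IsRoot.def, eval_charpoly,
    ← not_imp_not, not_lt]

theorem re_sub_inv_mul_ofReal_nonneg {z : ℂ} (hz : 0 ≤ z.re) {c : ℝ} (hc : c ≤ 0) :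
    0 ≤ (z - z⁻¹ * c).re := by
  have hinv : 0 ≤ (z⁻¹).re := by
    rw [Complex.inv_re]
    exact div_nonneg hz (Complex.normSq_nonneg z)
  rw [Complex.sub_re, Complex.re_mul_ofReal]
  linarith [mul_nonpos_of_nonneg_of_nonpos hinv hc]

theorem IsNegDiagDominant.hurwitzStable_fromBlocks_diagonal {A : Matrix ι ι ℝ}
    (hA : IsNegDiagDominant A) {b e : ι → ℝ} (hbe : ∀ i, b i * e i < 0) :
    HurwitzStable (fromBlocks A (diagonal b) (diagonal e) 0) := by
  refine hurwitzStable_iff_det_ne_zero.2 fun z hz => ?_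
  have hblocks : scalar (ι ⊕ ι) z -
      (fromBlocks A (diagonal b) (diagonal e) 0).map (Complex.ofReal ·) =
        fromBlocks (scalar ι z - A.map (Complex.ofReal ·)) (diagonal fun i => -(b i : ℂ))
          (diagonal fun i => -(e i : ℂ)) (scalar ι z) := by
    ext (i | i) (j | j) <;> obtain rfl | hij := eq_or_ne i j <;> simp [*]
  have hschur : scalar ι z - A.map (Complex.ofReal ·) -
      z⁻¹ • (diagonal (fun i => -(b i : ℂ)) * diagonal fun i => -(e i : ℂ)) =
        diagonal (fun i => z - z⁻¹ * ↑(b i * e i)) - A.map (Complex.ofReal ·) := by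
    rw [diagonal_mul_diagonal, ← diagonal_smul, scalar_apply, sub_right_comm, diagonal_sub]
    simp
  rw [hblocks]
  obtain rfl | hz0 := eq_or_ne z 0
  · have hb (i : ι) : b i ≠ 0 := left_ne_zero_of_mul (hbe i).ne
    have he (i : ι) : e i ≠ 0 := right_ne_zero_of_mul (hbe i).ne
    rw [map_zero]
    refine det_fromBlocks_zero₂₂_ne_zero _ ?_ ?_ <;>
      simp [det_diagonal, Finset.prod_ne_zero_iff, hb, he]
  · refine det_fromBlocks_scalar₂₂_ne_zero hz0 ?_
    rw [hschur]
    exact hA.det_diagonal_sub_ne_zero fun i => re_sub_inv_mul_ofReal_nonneg hz (hbe i).le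

/-- A real matrix `M` is *multiplicative D-stable* if `D * M` is Hurwitz stable for every positive
diagonal matrix `D`, encoded by its diagonal `d`. -/
def IsMulDStable (M : Matrix ι ι ℝ) : Prop :=
  ∀ d : ι → ℝ, (∀ i, 0 < d i) → HurwitzStable (diagonal d * M)

theorem stmt0_general {A B E : Matrix ι ι ℝ} (hA : IsNegDiagDominant A) (hB : B.IsDiag)
    (hE : E.IsDiag) (hBE : ∀ i, B i i * E i i < 0) : IsMulDStable (fromBlocks A B E 0) := by
  intro d hd
  obtain ⟨b, rfl⟩ : ∃ b, B = diagonal b := ⟨B.diag, hB.diagonal_diag.symm⟩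
  obtain ⟨e, rfl⟩ : ∃ e, E = diagonal e := ⟨E.diag, hE.diagonal_diag.symm⟩
  have hscale : diagonal d * fromBlocks A (diagonal b) (diagonal e) 0 =
      fromBlocks (diagonal (d ∘ Sum.inl) * A) (diagonal fun i => d (.inl i) * b i)
        (diagonal fun i => d (.inr i) * e i) 0 := by
    rw [← Sum.elim_comp_inl_inr d, ← fromBlocks_diagonal, fromBlocks_multiply]
    simp
  rw [hscale]
  refine (hA.diagonal_mul fun i => hd (.inl i)).hurwitzStable_fromBlocks_diagonal fun i => ?_
  rw [mul_mul_mul_comm]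
  exact mul_neg_of_pos_of_neg (mul_pos (hd _) (hd _)) (by simpa using hBE i)

end Stability

theorem stmt0 {n : ℕ} (A B : Matrix (Fin n) (Fin n) ℝ)
    (hAneg : ∀ i, A i i < 0)
    (hBneg : ∀ i, B i i < 0)
    (hBdiag : ∀ i j, i ≠ j → B i j = 0)
    (hNDD : ∃ m : Fin n → ℝ, (∀ i, 0 < m i) ∧
      ∀ i, (∑ j ∈ Finset.univ.erase i, m j * |A i j|) < m i * |A i i|) :
    ∀ d : (Fin n ⊕ Fin n) → ℝ, (∀ k, 0 < d k) →
      HurwitzStable ((Matrix.diagonal d) * (Matrix.fromBlocks A B 1 0)) :=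
  stmt0_general ⟨hAneg, hNDD⟩ (fun i j => hBdiag i j) isDiag_one (by simpa using hBneg)
end

section
/- Let A = (a_ij) be a real n×n matrix with a_ii < 0 for all i, and let b < 0 be a real number. Then the following are equivalent: (i) for every n×n positive diagonal matrix D, the 2n×2n block matrix [[D·A, b·I_n], [I_n, 0]] is Hurwitz stable; (ii) A is multiplicative D-stable, i.e., DA is Hurwitz stable for every n×n positive diagonal matrix D. -/
open Matrix

/-!
The block matrix `[[M, b], [1, 0]]` linearizes the quadratic eigenvalue problem
`det (z² - z M - b) = 0`, so for `b ≠ 0` its eigenvalues are the nonzero `z` such that `z - b / z`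
is an eigenvalue of `M`. Every complex number has the form `z - b / z`, and for `b < 0` passing from
`z` to `z - b / z` multiplies the real part by the positive factor `1 - b / |z|²`. Hence stability
of the block matrix and of `M` are equivalent for each single `M`, in particular for `M = D A`.
-/

theorem exists_ne_zero_sub_div_eq {K : Type*} [Field K] [IsAlgClosed K] {c : K} (hc : c ≠ 0)
    (w : K) : ∃ z ≠ 0, z - c / z = w := by
  open Polynomial in
  have hdeg : (X ^ 2 - C w * X - C c).degree = 2 := by compute_degree!
  obtain ⟨z, hz⟩ := IsAlgClosed.exists_root _ (hdeg.trans_ne two_ne_zero)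
  have hquad : z ^ 2 - w * z - c = 0 := by simpa using hz
  have hz0 : z ≠ 0 := by
    rintro rfl
    simp [hc] at hquad
  refine ⟨z, hz0, ?_⟩
  field_simp
  linear_combination hquad

theorem re_sub_ofReal_div (b : ℝ) (z : ℂ) :
    (z - b / z).re = z.re * (1 - b / Complex.normSq z) := by
  simp only [Complex.sub_re, Complex.div_re, Complex.ofReal_re, Complex.ofReal_im, zero_mul,
    zero_div, add_zero]
  ring

theorem re_sub_ofReal_div_neg_iff {b : ℝ} (hb : b ≤ 0) (z : ℂ) :
    (z - b / z).re < 0 ↔ z.re < 0 := by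
  have factor_pos : 0 < 1 - b / Complex.normSq z := by
    linarith [div_nonpos_of_nonpos_of_nonneg hb (Complex.normSq_nonneg z)]
  rw [re_sub_ofReal_div, mul_comm]
  exact smul_neg_iff_of_pos_left factor_pos

section BlockMatrix

variable {m : Type*} [Fintype m] [DecidableEq m]

theorem mem_spectrum_fromBlocks_one_zero_iff {R : Type*} [CommRing R] (M B : Matrix m m R)
    (z : R) :
    z ∈ spectrum R (fromBlocks M B 1 0 : Matrix (m ⊕ m) (m ⊕ m) R) ↔
      ¬IsUnit (z • (z • 1 - M) - B) := by
  -- The swap makes the pivot block `1`, so the Schur complement covers `z = 0` as well.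
  have swap_rows : (fromBlocks M B 1 0 - z • 1).submatrix (Equiv.sumComm m m) (Equiv.refl _) =
      fromBlocks 1 (-z • 1) (M - z • 1) B := by
    ext (i | i) (j | j) <;> simp [one_apply]
  have schur : B - (M - z • 1) * (-z • 1) = B - z • (z • 1 - M) := by
    simp [smul_sub]
  let _ : Invertible (1 : Matrix m m R) := invertibleOne
  rw [spectrum.mem_iff, Algebra.algebraMap_eq_smul_one, IsUnit.sub_iff,
    ← isUnit_submatrix_equiv (e₁ := Equiv.sumComm m m) (e₂ := Equiv.refl _), swap_rows,
    isUnit_fromBlocks_iff_of_invertible₁₁, invOf_one, mul_one, schur, IsUnit.sub_iff]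

theorem mem_spectrum_fromBlocks_smul_one_iff {K : Type*} [Field K] (M : Matrix m m K)
    {c : K} (hc : c ≠ 0) (z : K) :
    z ∈ spectrum K (fromBlocks M (c • 1) 1 0 : Matrix (m ⊕ m) (m ⊕ m) K) ↔
      z ≠ 0 ∧ z - c / z ∈ spectrum K M := by
  rw [mem_spectrum_fromBlocks_one_zero_iff]
  rcases eq_or_ne z 0 with rfl | hz
  · have : IsUnit (c • (1 : Matrix m m K)) := isUnit_one.smul (Units.mk0 c hc)
    simpa using this
  · have factor : z • (z • 1 - M) - c • 1 = Units.mk0 z hz • ((z - c / z) • 1 - M) := by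
      simp only [Units.smul_mk0, smul_sub, sub_smul, smul_smul, mul_div_cancel₀ _ hz]
      abel
    rw [factor, isUnit_smul_iff, and_iff_right hz, spectrum.mem_iff,
      Algebra.algebraMap_eq_smul_one]

theorem mem_spec_fromBlocks_smul_one_iff (M : Matrix m m ℝ) {b : ℝ} (hb : b ≠ 0) (z : ℂ) :
    z ∈ spec (fromBlocks M (b • 1) 1 0 : Matrix (m ⊕ m) (m ⊕ m) ℝ) ↔
      z ≠ 0 ∧ z - b / z ∈ spec M := by
  have map_block : (fromBlocks M (b • 1) 1 0 : Matrix (m ⊕ m) (m ⊕ m) ℝ).map (Complex.ofReal ·) =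
      fromBlocks (M.map (Complex.ofReal ·)) ((b : ℂ) • 1) 1 0 := by
    rw [fromBlocks_map, Matrix.map_smul' _ _ _ Complex.ofReal_mul]
    simp
  rw [spec, map_block, mem_spectrum_fromBlocks_smul_one_iff _ (Complex.ofReal_ne_zero.2 hb), spec]

theorem stmt1_general (M : Matrix m m ℝ) {b : ℝ} (hb : b < 0) :
    HurwitzStable (fromBlocks M (b • 1) 1 0 : Matrix (m ⊕ m) (m ⊕ m) ℝ) ↔ HurwitzStable M := by
  constructor
  · intro hblock w hw
    obtain ⟨z, hz, rfl⟩ := exists_ne_zero_sub_div_eq (Complex.ofReal_ne_zero.2 hb.ne) w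
    exact (re_sub_ofReal_div_neg_iff hb.le z).2 <|
      hblock z ((mem_spec_fromBlocks_smul_one_iff M hb.ne z).2 ⟨hz, hw⟩)
  · intro hM z hz
    exact (re_sub_ofReal_div_neg_iff hb.le z).1 <|
      hM _ ((mem_spec_fromBlocks_smul_one_iff M hb.ne z).1 hz).2

end BlockMatrix

theorem stmt1 {n : ℕ} (A : Matrix (Fin n) (Fin n) ℝ) (b : ℝ)
    (hAneg : ∀ i, A i i < 0) (hb : b < 0) :
    (∀ d : Fin n → ℝ, (∀ i, 0 < d i) →
        HurwitzStable (Matrix.fromBlocks ((Matrix.diagonal d) * A)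
          (b • (1 : Matrix (Fin n) (Fin n) ℝ)) 1 0))
    ↔ (∀ d : Fin n → ℝ, (∀ i, 0 < d i) → HurwitzStable ((Matrix.diagonal d) * A)) := by
  exact forall₂_congr fun d _ => stmt1_general (diagonal d * A) hb
end

section
/- Let B = (b_ij) be a real n×n matrix with b_ii < 0 for all i, and let a < 0 be a real number. Assume B is multiplicative D-negative: for every n×n positive diagonal matrix D, all eigenvalues of DB are real and negative. Then for every n×n positive diagonal matrix D, the 2n×2n block matrix [[a·I_n, D·B], [I_n, 0]] is Hurwitz stable. -/
open Matrix

/-!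
Since `z` is an eigenvalue of `[[a • 1, M], [1, 0]]` exactly when `z ^ 2 - a * z` is an eigenvalue
of `M`, stability asks where the map `z ↦ z ^ 2 - a * z` sends the closed right half-plane. For
`a < 0` its image avoids the open region `im ^ 2 < a ^ 2 * -re` inside a leftward parabola, which
contains the negative real axis.
-/

section Companion

variable {R m : Type*} [CommRing R] [Fintype m] [DecidableEq m]

theorem isUnit_fromBlocks_neg_one_smul_one_iff (P M : Matrix m m R) (z : R) :
    IsUnit (fromBlocks P (-M) (-1 : Matrix m m R) (z • 1)) ↔ IsUnit (z • P - M) := by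
  let U : (Matrix (m ⊕ m) (m ⊕ m) R)ˣ :=
    { val := fromBlocks (z • 1) (-1) 1 0
      inv := fromBlocks 0 1 (-1) (z • 1)
      val_inv := by simp [fromBlocks_multiply]
      inv_val := by simp [fromBlocks_multiply] }
  have triangular : fromBlocks P (-M) (-1 : Matrix m m R) (z • 1) * U.val =
      fromBlocks (z • P - M) (-P) 0 1 := by
    simp [U, fromBlocks_multiply, sub_eq_add_neg]
  rw [← Units.isUnit_mul_units _ U, triangular, isUnit_fromBlocks_zero₂₁]
  exact and_iff_left isUnit_one

theorem mem_spectrum_fromBlocks_smul_one_iff_s2 (a : R) (M : Matrix m m R) (z : R) :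
    z ∈ spectrum R (fromBlocks (a • 1) M (1 : Matrix m m R) 0) ↔ z ^ 2 - a * z ∈ spectrum R M := by
  have resolvent_eq : algebraMap R (Matrix (m ⊕ m) (m ⊕ m) R) z - fromBlocks (a • 1) M 1 0 =
      fromBlocks ((z - a) • 1) (-M) (-1) (z • 1) := by
    rw [Algebra.algebraMap_eq_smul_one, ← fromBlocks_one, fromBlocks_smul, sub_eq_add_neg,
      fromBlocks_neg, fromBlocks_add]
    simp [sub_smul, ← sub_eq_add_neg]
  have coeff_eq : z ^ 2 - a * z = z * (z - a) := by ring
  rw [spectrum.mem_iff, spectrum.mem_iff, resolvent_eq, isUnit_fromBlocks_neg_one_smul_one_iff,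
    smul_smul, coeff_eq, Algebra.algebraMap_eq_smul_one]

end Companion

theorem mem_spec_fromBlocks_smul_one_iff_s2 {m : Type*} [Fintype m] [DecidableEq m]
    (a : ℝ) (M : Matrix m m ℝ) (z : ℂ) :
    z ∈ spec (fromBlocks (a • 1) M (1 : Matrix m m ℝ) 0) ↔ z ^ 2 - a * z ∈ spec M := by
  have map_eq : (fromBlocks (a • 1) M (1 : Matrix m m ℝ) 0).map Complex.ofReal =
      fromBlocks ((a : ℂ) • 1) (M.map Complex.ofReal) 1 0 := by
    rw [fromBlocks_map, Matrix.map_smul' _ _ _ Complex.ofReal_mul]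
    simp
  rw [spec, map_eq, mem_spectrum_fromBlocks_smul_one_iff_s2, spec]

theorem re_neg_of_im_sq_lt_sq_mul_neg_re {a : ℝ} (ha : a < 0) {z : ℂ}
    (hz : (z ^ 2 - a * z).im ^ 2 < a ^ 2 * -(z ^ 2 - a * z).re) : z.re < 0 := by
  by_contra! re_nonneg
  have im_eq : (z ^ 2 - a * z).im = z.im * (2 * z.re - a) := by
    simp only [pow_two, Complex.sub_im, Complex.mul_im, Complex.ofReal_re, Complex.ofReal_im]
    ring
  have re_eq : (z ^ 2 - a * z).re = z.re ^ 2 - z.im ^ 2 - a * z.re := by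
    simp [pow_two]
  have a_mul_re_nonpos : a * z.re ≤ 0 := mul_nonpos_of_nonpos_of_nonneg ha.le re_nonneg
  refine hz.not_ge ?_
  calc a ^ 2 * -(z ^ 2 - a * z).re
      = a ^ 2 * (z.im ^ 2 - z.re ^ 2 + a * z.re) := by rw [re_eq]; ring
    _ ≤ a ^ 2 * z.im ^ 2 := by gcongr; linarith [sq_nonneg z.re]
    _ ≤ (2 * z.re - a) ^ 2 * z.im ^ 2 := by gcongr ?_ * _; linarith [sq_nonneg z.re]
    _ = (z ^ 2 - a * z).im ^ 2 := by rw [im_eq]; ring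

theorem im_sq_lt_sq_mul_neg_re {a : ℝ} (ha : a ≠ 0) {μ : ℂ} (him : μ.im = 0) (hre : μ.re < 0) :
    μ.im ^ 2 < a ^ 2 * -μ.re := by
  simpa only [him, zero_pow two_ne_zero] using mul_pos (sq_pos_of_ne_zero ha) (neg_pos.2 hre)

theorem stmt2_general {m : Type*} [Fintype m] [DecidableEq m] {a : ℝ} (ha : a < 0)
    {M : Matrix m m ℝ} (hM : ∀ μ ∈ spec M, μ.im ^ 2 < a ^ 2 * -μ.re) :
    HurwitzStable (fromBlocks (a • 1) M (1 : Matrix m m ℝ) 0) := fun z hz =>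
  re_neg_of_im_sq_lt_sq_mul_neg_re ha (hM _ ((mem_spec_fromBlocks_smul_one_iff_s2 a M z).1 hz))

theorem stmt2 {n : ℕ} (B : Matrix (Fin n) (Fin n) ℝ) (a : ℝ)
    (hBneg : ∀ i, B i i < 0) (ha : a < 0)
    (hDneg : ∀ d : Fin n → ℝ, (∀ i, 0 < d i) →
      ∀ z ∈ spec ((Matrix.diagonal d) * B), z.im = 0 ∧ z.re < 0) :
    ∀ d : Fin n → ℝ, (∀ i, 0 < d i) →
      HurwitzStable (Matrix.fromBlocks (a • (1 : Matrix (Fin n) (Fin n) ℝ))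
        ((Matrix.diagonal d) * B) 1 0) := fun d hd =>
  stmt2_general ha fun μ hμ => (hDneg d hd μ hμ).elim (im_sq_lt_sq_mul_neg_re ha.ne)
end

section
/- Let A be a real n×n matrix and suppose A is diagonally hyperbolic: there exists an invertible real diagonal matrix D₀ such that D₀A + AᵀD₀ is positive definite. Then A is multiplicative D-hyperbolic: for every invertible real diagonal matrix D, every λ ∈ σ(DA) has Re λ ≠ 0. -/
open Matrix

/-- A real matrix `W` is positive definite (as a quadratic form):
`xᵀ W x > 0` for every nonzero real vector `x`. -/
def PosDefQ {n : ℕ} (W : Matrix (Fin n) (Fin n) ℝ) : Prop :=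
  ∀ x : Fin n → ℝ, x ≠ 0 → 0 < x ⬝ᵥ (W *ᵥ x)

/-
For `M = D * A` and `H = S * D⁻¹` the relation `S * D = Dᴴ * S` gives
`H * M + Mᴴ * H = S * A + Aᴴ * S =: P`, so the invertible factor `D` disappears. If `M v = z v`,
then `vᴴ P v = 2 (Re z) vᴴ H v`. With `P` positive definite the left side is nonzero for `v ≠ 0`,
hence so is `Re z`. Diagonal `S = D₀` and `D` satisfy the relation because they are real and
commute.
-/

section Lyapunov

variable {ι : Type*} [Fintype ι]

theorem exists_mulVec_eq_smul_of_mem_spectrum {K : Type*} [Field K] [DecidableEq ι]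
    {M : Matrix ι ι K} {z : K} (hz : z ∈ spectrum K M) : ∃ v ≠ 0, M *ᵥ v = z • v := by
  rw [← spectrum_toLin', ← Module.End.hasEigenvalue_iff_mem_spectrum] at hz
  obtain ⟨v, hv⟩ := hz.exists_hasEigenvector
  exact ⟨v, hv.2, hv.apply_eq_smul⟩

theorem star_dotProduct_mul_add_conjTranspose_mul_mulVec {R : Type*} [CommRing R] [StarRing R]
    (H : Matrix ι ι R) {M : Matrix ι ι R} {v : ι → R} {z : R} (hv : M *ᵥ v = z • v) :
    star v ⬝ᵥ ((H * M + Mᴴ * H) *ᵥ v) = (z + star z) * (star v ⬝ᵥ (H *ᵥ v)) := by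
  have hHM : star v ⬝ᵥ ((H * M) *ᵥ v) = z * (star v ⬝ᵥ (H *ᵥ v)) := by
    rw [← mulVec_mulVec, hv, mulVec_smul, dotProduct_smul, smul_eq_mul]
  have hMH : star v ⬝ᵥ ((Mᴴ * H) *ᵥ v) = star z * (star v ⬝ᵥ (H *ᵥ v)) := by
    rw [← mulVec_mulVec, dotProduct_mulVec, ← star_mulVec, hv, star_smul, smul_dotProduct,
      smul_eq_mul]
  rw [add_mulVec, dotProduct_add, hHM, hMH, add_mul]

open scoped ComplexOrder

variable {𝕜 : Type*} [RCLike 𝕜]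

theorem re_ne_zero_of_mem_spectrum_of_posDef [DecidableEq ι] {H M : Matrix ι ι 𝕜}
    (hP : (H * M + Mᴴ * H).PosDef) {z : 𝕜} (hz : z ∈ spectrum 𝕜 M) : RCLike.re z ≠ 0 := by
  obtain ⟨v, hv₀, hv⟩ := exists_mulVec_eq_smul_of_mem_spectrum hz
  intro hre
  have hz_skew : z + star z = 0 := by
    rw [RCLike.star_def, RCLike.add_conj, hre, RCLike.ofReal_zero, mul_zero]
  have hpos := hP.dotProduct_mulVec_pos hv₀
  rw [star_dotProduct_mul_add_conjTranspose_mul_mulVec H hv, hz_skew, zero_mul] at hpos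
  exact hpos.false

end Lyapunov

section Complexification

open scoped ComplexOrder

theorem isSymm_mul_add_transpose_mul {ι R : Type*} [Fintype ι] [CommSemiring R]
    {S : Matrix ι ι R} (hS : S.IsSymm) (A : Matrix ι ι R) : (S * A + Aᵀ * S).IsSymm := by
  simpa only [transpose_mul, hS.eq] using isSymm_add_transpose_self (S * A)

theorem PosDefQ.posDef {n : ℕ} {W : Matrix (Fin n) (Fin n) ℝ} (hW : PosDefQ W)
    (hsymm : W.IsSymm) : W.PosDef :=
  .of_dotProduct_mulVec_pos (isHermitian_iff_isSymm.mpr hsymm) hW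

theorem map_ofReal_mul_add_transpose_mul {ι 𝕜 : Type*} [Fintype ι] [RCLike 𝕜]
    (S A : Matrix ι ι ℝ) :
    (S * A + Aᵀ * S).map (RCLike.ofReal : ℝ → 𝕜) =
      S.map RCLike.ofReal * A.map RCLike.ofReal + (A.map RCLike.ofReal)ᴴ * S.map RCLike.ofReal := by
  ext i j
  simp [mul_apply]

theorem posDef_map_ofReal {ι 𝕜 : Type*} [Finite ι] [RCLike 𝕜] {W : Matrix ι ι ℝ}
    (hW : W.PosDef) : (W.map (RCLike.ofReal : ℝ → 𝕜)).PosDef := by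
  classical
  have := Fintype.ofFinite ι
  open scoped MatrixOrder Matrix.Norms.L2Operator in
  obtain ⟨B, hB, rfl⟩ := CStarAlgebra.isStrictlyPositive_iff_eq_star_mul_self.mp
    hW.isStrictlyPositive
  have hB_map : IsUnit (B.map (RCLike.ofReal : ℝ → 𝕜)) := hB.map (algebraMap ℝ 𝕜).mapMatrix
  have hfactor : (star B * B).map (RCLike.ofReal : ℝ → 𝕜) =
      (B.map RCLike.ofReal)ᴴ * B.map RCLike.ofReal := by
    ext i j
    simp [mul_apply]
  rw [hfactor]
  exact .conjTranspose_mul_self _ (mulVec_injective_of_isUnit hB_map)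

theorem PosDefQ.posDef_map_ofReal_mul_add_conjTranspose_mul {n : ℕ} {𝕜 : Type*} [RCLike 𝕜]
    {S A : Matrix (Fin n) (Fin n) ℝ} (hP : PosDefQ (S * A + Aᵀ * S)) (hS : S.IsSymm) :
    (S.map (RCLike.ofReal : ℝ → 𝕜) * A.map RCLike.ofReal +
      (A.map RCLike.ofReal)ᴴ * S.map RCLike.ofReal).PosDef := by
  rw [← map_ofReal_mul_add_transpose_mul]
  exact posDef_map_ofReal (hP.posDef (isSymm_mul_add_transpose_mul hS A))

theorem spec_mul {m : Type*} [Fintype m] [DecidableEq m] (D A : Matrix m m ℝ) :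
    spec (D * A) = spectrum ℂ (D.map Complex.ofReal * A.map Complex.ofReal) :=
  congrArg (spectrum ℂ) (Matrix.map_mul (f := Complex.ofRealHom))

end Complexification

open scoped ComplexOrder in
theorem stmt7_general {ι 𝕜 : Type*} [Fintype ι] [DecidableEq ι] [RCLike 𝕜] {S D A : Matrix ι ι 𝕜}
    (hD : IsUnit D) (hSD : S * D = Dᴴ * S) (hP : (S * A + Aᴴ * S).PosDef)
    {z : 𝕜} (hz : z ∈ spectrum 𝕜 (D * A)) : RCLike.re z ≠ 0 := by
  have hdet : IsUnit D.det := (isUnit_iff_isUnit_det D).mp hD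
  have hleft : S * D⁻¹ * (D * A) = S * A := by
    rw [Matrix.mul_assoc, nonsing_inv_mul_cancel_left D A hdet]
  have hright : (D * A)ᴴ * (S * D⁻¹) = Aᴴ * S := by
    rw [conjTranspose_mul, Matrix.mul_assoc, ← Matrix.mul_assoc Dᴴ, ← hSD,
      mul_nonsing_inv_cancel_right D S hdet]
  rw [← hleft, ← hright] at hP
  exact re_ne_zero_of_mem_spectrum_of_posDef hP hz

theorem stmt7 {n : ℕ} (A : Matrix (Fin n) (Fin n) ℝ)
    (hdh : ∃ d₀ : Fin n → ℝ, (∀ i, d₀ i ≠ 0) ∧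
      PosDefQ ((Matrix.diagonal d₀) * A + Aᵀ * (Matrix.diagonal d₀))) :
    ∀ d : Fin n → ℝ, (∀ i, d i ≠ 0) →
      ∀ z ∈ spec ((Matrix.diagonal d) * A), z.re ≠ 0 := by
  obtain ⟨d₀, -, hP⟩ := hdh
  intro d hd z hz
  have hD : IsUnit (diagonal d) := isUnit_diagonal.mpr (Pi.isUnit_iff.mpr fun i ↦ (hd i).isUnit)
  have hcomm : (diagonal d₀).map Complex.ofReal * (diagonal d).map Complex.ofReal =
      ((diagonal d).map Complex.ofReal)ᴴ * (diagonal d₀).map Complex.ofReal := by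
    simp [diagonal_map, mul_comm]
  rw [spec_mul] at hz
  exact stmt7_general (hD.map Complex.ofRealHom.mapMatrix) hcomm
    (hP.posDef_map_ofReal_mul_add_conjTranspose_mul (isSymm_diagonal d₀)) hz
end

section
/- Every multiplicative D-stable real n×n matrix A is invertible, and A is multiplicative D-stable if and only if A⁻¹ is multiplicative D-stable. -/
open Matrix

/-- A real square matrix `A` is multiplicative D-stable if `D * A` is Hurwitz stable
for every positive diagonal matrix `D`. -/
def MultDStable {n : ℕ} (A : Matrix (Fin n) (Fin n) ℝ) : Prop :=
  ∀ d : Fin n → ℝ, (∀ i, 0 < d i) → HurwitzStable ((Matrix.diagonal d) * A)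

/-!
For a positive diagonal `D`, the matrix `D A⁻¹` is the inverse of `A D⁻¹`, which has the same
characteristic polynomial as `D⁻¹ A`. Inverting a matrix inverts its eigenvalues, and `z ↦ z⁻¹`
preserves the open left half-plane.
-/

open scoped Pointwise

section Matrix

variable {m : Type*} [Fintype m] [DecidableEq m]

theorem isUnit_matrix_map_iff {R S : Type*} [CommRing R] [CommRing S] (f : R →+* S) [IsLocalHom f]
    {M : Matrix m m R} : IsUnit (M.map f) ↔ IsUnit M := by
  rw [isUnit_iff_isUnit_det, isUnit_iff_isUnit_det, ← RingHom.mapMatrix_apply, ← RingHom.map_det,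
    isUnit_map_iff]

theorem inv_diagonal_of_ne_zero {K : Type*} [Field K] {d : m → K} (hd : ∀ i, d i ≠ 0) :
    (diagonal d)⁻¹ = diagonal d⁻¹ := by
  refine inv_eq_right_inv ?_
  rw [diagonal_mul_diagonal, diagonal_eq_one]
  exact funext fun i ↦ mul_inv_cancel₀ (hd i)

end Matrix

theorem re_inv_neg_iff {z : ℂ} : z⁻¹.re < 0 ↔ z.re < 0 := by
  rcases eq_or_ne z 0 with rfl | hz
  · rw [_root_.inv_zero]
  · rw [Complex.inv_re, div_lt_iff₀ (Complex.normSq_pos.2 hz), zero_mul]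

section Spec

variable {m : Type*} [Fintype m] [DecidableEq m] {M : Matrix m m ℝ}

theorem zero_notMem_spec_iff : 0 ∉ spec M ↔ IsUnit M :=
  (spectrum.zero_notMem_iff ℂ).trans (isUnit_matrix_map_iff Complex.ofRealHom)

theorem spec_inv (hM : IsUnit M) : spec M⁻¹ = (spec M)⁻¹ := by
  obtain ⟨u, rfl⟩ := hM
  rw [← coe_units_inv]
  exact (spectrum.map_inv (Units.map (Complex.ofRealHom.mapMatrix (m := m)).toMonoidHom u)).symm

theorem spec_mul_comm (M N : Matrix m m ℝ) : spec (M * N) = spec (N * M) := by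
  ext z
  change z ∈ spectrum ℂ ((M * N).map Complex.ofRealHom) ↔
    z ∈ spectrum ℂ ((N * M).map Complex.ofRealHom)
  rw [mem_spectrum_iff_isRoot_charpoly, mem_spectrum_iff_isRoot_charpoly, Matrix.map_mul,
    Matrix.map_mul, charpoly_mul_comm]

end Spec

namespace HurwitzStable

variable {m : Type*} [Fintype m] [DecidableEq m] {M N : Matrix m m ℝ}

theorem isUnit (hM : HurwitzStable M) : IsUnit M :=
  zero_notMem_spec_iff.1 fun h0 ↦ (hM 0 h0).ne Complex.zero_re

theorem inv (hM : HurwitzStable M) : HurwitzStable M⁻¹ := by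
  intro z hz
  rw [spec_inv hM.isUnit, Set.mem_inv] at hz
  exact re_inv_neg_iff.1 (hM z⁻¹ hz)

theorem mul_comm (h : HurwitzStable (M * N)) : HurwitzStable (N * M) := by
  rwa [HurwitzStable, spec_mul_comm]

end HurwitzStable

namespace MultDStable

variable {n : ℕ} {A : Matrix (Fin n) (Fin n) ℝ}

theorem hurwitzStable (hA : MultDStable A) : HurwitzStable A := by
  simpa only [diagonal_one, one_mul] using hA (fun _ ↦ 1) fun _ ↦ one_pos

theorem isUnit (hA : MultDStable A) : IsUnit A :=
  hA.hurwitzStable.isUnit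

theorem inv (hA : MultDStable A) : MultDStable A⁻¹ := by
  intro d hd
  have hd_inv : ∀ i, 0 < d⁻¹ i := fun i ↦ inv_pos.2 (hd i)
  have inv_eq : (A * diagonal d⁻¹)⁻¹ = diagonal d * A⁻¹ := by
    rw [Matrix.mul_inv_rev, inv_diagonal_of_ne_zero fun i ↦ (hd_inv i).ne', inv_inv]
  rw [← inv_eq]
  exact (hA d⁻¹ hd_inv).mul_comm.inv

end MultDStable

theorem stmt9 {n : ℕ} (A : Matrix (Fin n) (Fin n) ℝ) :
    (MultDStable A → IsUnit A) ∧ (MultDStable A ↔ MultDStable A⁻¹) := by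
  refine ⟨MultDStable.isUnit, MultDStable.inv, fun h ↦ ?_⟩
  have hA : IsUnit A := isUnit_nonsing_inv_iff.1 h.isUnit
  simpa only [nonsing_inv_nonsing_inv A ((isUnit_iff_isUnit_det A).1 hA)] using h.inv
end

section
/- Let A, P, G be real n×n matrices, where P and G are symmetric positive definite and commute (PG = GP). If PA + AᵀP is positive definite, then the matrix AG is positive stable (every λ ∈ σ(AG) has Re λ > 0) and the matrix A + G is positive stable (every λ ∈ σ(A+G) has Re λ > 0). -/
open Matrix

/-- A real square matrix is positive stable if every eigenvalue has positive real part. -/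
def PosStable {m : Type*} [Fintype m] [DecidableEq m] (M : Matrix m m ℝ) : Prop :=
  ∀ z ∈ spec M, 0 < z.re

/-!
The argument is carried out in a unital C⋆-algebra. An element with strictly positive real part is
invertible: after a congruence its real part is `1`, and `1 + k` with `k` skew-adjoint is
invertible because `(1 + k)⋆ (1 + k) = 1 + k⋆ k ≥ 1`. Applied to `q (m - z)` with `Re z ≤ 0`, this
is Lyapunov's criterion: if `q` and `q m + m⋆ q` are strictly positive, then the spectrum of `m`
lies in the open right half-plane. Both claims are instances of the criterion: take `q = p g` for
`m = a g`, where `q m + m⋆ q = g (p a + a⋆ p) g`, and `q = p` for `m = a + g`, where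
`q m + m⋆ q = (p a + a⋆ p) + 2 p g`.
-/

section CStarAlgebra

variable {A : Type*} [CStarAlgebra A] [PartialOrder A] [StarOrderedRing A]

lemma isUnit_one_add_of_mem_skewAdjoint {k : A} (hk : k ∈ skewAdjoint A) : IsUnit (1 + k) := by
  have hstar : star (1 + k) = 1 - k := by
    rw [star_add, star_one, skewAdjoint.mem_iff.mp hk, sub_eq_add_neg]
  have hcomm : Commute (star (1 + k)) (1 + k) := by
    rw [hstar]
    exact (Commute.one_left _).sub_left ((Commute.one_right k).add_right (Commute.refl k))
  have hsq : star (1 + k) * (1 + k) = 1 + star k * k := by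
    rw [hstar, skewAdjoint.mem_iff.mp hk]
    noncomm_ring
  have hunit : IsUnit (star (1 + k) * (1 + k)) := by
    rw [hsq]
    exact (isStrictlyPositive_one.add_nonneg (star_mul_self_nonneg k)).isUnit
  exact (hcomm.isUnit_mul_iff.mp hunit).2

lemma isUnit_add_of_isStrictlyPositive_of_mem_skewAdjoint {h k : A} (hh : IsStrictlyPositive h)
    (hk : k ∈ skewAdjoint A) : IsUnit (h + k) := by
  obtain ⟨_, ⟨b, rfl⟩, rfl⟩ := CStarAlgebra.isStrictlyPositive_iff_eq_star_mul_self.mp hh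
  have hcancel : star (b : A) * star (↑b⁻¹ : A) = 1 := by rw [← star_mul, b.inv_mul, star_one]
  have hcongr : star (b : A) * b + k = ↑(star b) * (1 + star (↑b⁻¹ : A) * k * ↑b⁻¹) * ↑b := by
    calc star (b : A) * b + k
        = star (b : A) * b + star (b : A) * star (↑b⁻¹ : A) * k * (↑b⁻¹ * ↑b) := by
          rw [hcancel, b.inv_mul, one_mul, mul_one]
      _ = ↑(star b) * (1 + star (↑b⁻¹ : A) * k * ↑b⁻¹) * ↑b := by
          rw [Units.coe_star]
          noncomm_ring
  rw [hcongr, Units.isUnit_mul_units, Units.isUnit_units_mul]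
  exact isUnit_one_add_of_mem_skewAdjoint (skewAdjoint.conjugate' hk _)

lemma isUnit_of_isStrictlyPositive_add_star {a : A} (ha : IsStrictlyPositive (a + star a)) :
    IsUnit a := by
  have hskew : a - star a ∈ skewAdjoint A := by
    rw [skewAdjoint.mem_iff, star_sub, star_star, neg_sub]
  have hsum : 2 * a = (a + star a) + (a - star a) := by
    rw [two_mul]
    abel
  have hunit : IsUnit (2 * a) := by
    rw [hsum]
    exact isUnit_add_of_isStrictlyPositive_of_mem_skewAdjoint ha hskew
  exact ((Commute.ofNat_left 2 a).isUnit_mul_iff.mp hunit).2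

theorem re_pos_of_mem_spectrum_of_isStrictlyPositive {q m : A} (hq : IsStrictlyPositive q)
    (h : IsStrictlyPositive (q * m + star m * q)) {z : ℂ} (hz : z ∈ spectrum ℂ m) : 0 < z.re := by
  by_contra! hre
  have hshift : q * (m - algebraMap ℂ A z) + star (q * (m - algebraMap ℂ A z)) =
      q * m + star m * q + (-2 * z.re) • q := by
    have hz_re : algebraMap ℂ A z + star (algebraMap ℂ A z) = algebraMap ℝ A (2 * z.re) := by
      rw [← algebraMap_star_comm, ← map_add, Complex.star_def, Complex.add_conj,
        IsScalarTower.algebraMap_apply ℝ ℂ A]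
      rfl
    calc q * (m - algebraMap ℂ A z) + star (q * (m - algebraMap ℂ A z))
        = q * m + star m * q - (algebraMap ℂ A z + star (algebraMap ℂ A z)) * q := by
          rw [star_mul, star_sub, hq.isSelfAdjoint.star_eq, mul_sub, ← Algebra.commutes z q]
          noncomm_ring
      _ = q * m + star m * q + (-2 * z.re) • q := by
          rw [hz_re, ← Algebra.smul_def, neg_mul, neg_smul, sub_eq_add_neg]
  have hunit : IsUnit (q * (m - algebraMap ℂ A z)) := by
    apply isUnit_of_isStrictlyPositive_add_star
    rw [hshift]
    exact h.add_nonneg (smul_nonneg (by linarith) hq.nonneg)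
  rw [hq.isUnit.mul_left_iff, IsUnit.sub_iff] at hunit
  exact hz hunit

theorem re_pos_of_mem_spectrum_mul {a p g : A} (hp : IsStrictlyPositive p)
    (hg : IsStrictlyPositive g) (hpg : Commute p g)
    (h : IsStrictlyPositive (p * a + star a * p)) {z : ℂ} (hz : z ∈ spectrum ℂ (a * g)) :
    0 < z.re := by
  refine re_pos_of_mem_spectrum_of_isStrictlyPositive ((hp.commute_iff hg).mp hpg) ?_ hz
  have hconj : p * g * (a * g) + star (a * g) * (p * g) = g * (p * a + star a * p) * g := by
    nth_rw 1 [hpg.eq]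
    rw [star_mul, hg.isSelfAdjoint.star_eq]
    noncomm_ring
  rw [hconj]
  exact h.conjugate_of_isUnit_of_isSelfAdjoint _ _ hg.isUnit hg.isSelfAdjoint

theorem re_pos_of_mem_spectrum_add {a p g : A} (hp : IsStrictlyPositive p) (hg : 0 ≤ g)
    (hpg : Commute p g) (h : IsStrictlyPositive (p * a + star a * p)) {z : ℂ}
    (hz : z ∈ spectrum ℂ (a + g)) : 0 < z.re := by
  refine re_pos_of_mem_spectrum_of_isStrictlyPositive hp ?_ hz
  have hsplit : p * (a + g) + star (a + g) * p = p * a + star a * p + (p * g + p * g) := by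
    rw [star_add, (IsSelfAdjoint.of_nonneg hg).star_eq, mul_add, add_mul, ← hpg.eq]
    abel
  have hpg_nonneg : 0 ≤ p * g := hpg.mul_nonneg hp.nonneg hg
  rw [hsplit]
  exact h.add_nonneg (add_nonneg hpg_nonneg hpg_nonneg)

theorem stmt14_general {a p g : A} (hp : IsStrictlyPositive p) (hg : IsStrictlyPositive g)
    (hpg : Commute p g) (h : IsStrictlyPositive (p * a + star a * p)) :
    (∀ z ∈ spectrum ℂ (a * g), 0 < z.re) ∧ ∀ z ∈ spectrum ℂ (a + g), 0 < z.re :=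
  ⟨fun _ ↦ re_pos_of_mem_spectrum_mul hp hg hpg h,
    fun _ ↦ re_pos_of_mem_spectrum_add hp hg.nonneg hpg h⟩

end CStarAlgebra

lemma isStrictlyPositive_map {F R S : Type*} [MonoidWithZero R] [Preorder R] [MonoidWithZero S]
    [Preorder S] [FunLike F R S] [MonoidWithZeroHomClass F R S] [OrderHomClass F R S] (f : F)
    {r : R} (hr : IsStrictlyPositive r) : IsStrictlyPositive (f r) :=
  (hr.isUnit.map f).isStrictlyPositive (map_nonneg f hr.nonneg)

lemma isSymm_mul_add_transpose_mul_s14 {m R : Type*} [Fintype m] [NonUnitalCommSemiring R]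
    {P : Matrix m m R} (hP : P.IsSymm) (A : Matrix m m R) : (P * A + Aᵀ * P).IsSymm := by
  rw [IsSymm, transpose_add, transpose_mul, transpose_mul, transpose_transpose, hP.eq, add_comm]

/-- The entrywise inclusion of real matrices into complex matrices, bundled as a star homomorphism
so that algebraic identities and strict positivity can be transported along it. -/
noncomputable def complexify (m : Type*) [Fintype m] [DecidableEq m] :
    Matrix m m ℝ →⋆ₐ[ℝ] Matrix m m ℂ where
  toAlgHom := Complex.ofRealAm.mapMatrix
  map_star' _ := conjTranspose_map _ fun x ↦ (Complex.conj_ofReal x).symm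

lemma complexify_transpose {m : Type*} [Fintype m] [DecidableEq m] (W : Matrix m m ℝ) :
    complexify m Wᵀ = star (complexify m W) := by
  rw [← map_star, star_eq_conjTranspose, conjTranspose_eq_transpose_of_trivial]

open scoped MatrixOrder Matrix.Norms.L2Operator

lemma PosDefQ.isStrictlyPositive {n : ℕ} {W : Matrix (Fin n) (Fin n) ℝ} (hW : PosDefQ W)
    (hsymm : W.IsSymm) : IsStrictlyPositive W :=
  (PosDef.of_dotProduct_mulVec_pos hsymm fun {x} hx ↦ hW x hx).isStrictlyPositive

lemma PosDefQ.isStrictlyPositive_complexify {n : ℕ} {W : Matrix (Fin n) (Fin n) ℝ}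
    (hW : PosDefQ W) (hsymm : W.IsSymm) : IsStrictlyPositive (complexify (Fin n) W) :=
  isStrictlyPositive_map _ (hW.isStrictlyPositive hsymm)

lemma isStrictlyPositive_complexify_mul_add_star_mul {n : ℕ} {A P : Matrix (Fin n) (Fin n) ℝ}
    (hP : P.IsSymm) (h : PosDefQ (P * A + Aᵀ * P)) :
    IsStrictlyPositive (complexify (Fin n) P * complexify (Fin n) A +
      star (complexify (Fin n) A) * complexify (Fin n) P) := by
  rw [← complexify_transpose, ← map_mul, ← map_mul, ← map_add]
  exact h.isStrictlyPositive_complexify (isSymm_mul_add_transpose_mul_s14 hP A)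

theorem stmt14 {n : ℕ} (A P G : Matrix (Fin n) (Fin n) ℝ)
    (hPsymm : P.IsSymm) (hPpd : PosDefQ P)
    (hGsymm : G.IsSymm) (hGpd : PosDefQ G)
    (hPG : P * G = G * P)
    (hLyap : PosDefQ (P * A + Aᵀ * P)) :
    PosStable (A * G) ∧ PosStable (A + G) := by
  have h := stmt14_general (hPpd.isStrictlyPositive_complexify hPsymm)
    (hGpd.isStrictlyPositive_complexify hGsymm) (Commute.map hPG (complexify (Fin n)))
    (isStrictlyPositive_complexify_mul_add_star_mul hPsymm hLyap)
  rwa [← map_mul, ← map_add] at h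
end

section
/- Let A be a real n×n matrix that is diagonally stable: there exists a positive diagonal matrix P such that PA + AᵀP is positive definite. Then for every positive diagonal matrix D, both DA and A + D are positive stable (all their complex eigenvalues have positive real part). -/
/-!
If `M v = z v`, then `v* (P M + M* P) v = 2 (Re z) v* P v`; hence `M` is positive stable as soon as
`P M + M* P` is positive definite for some positive semidefinite `P`. For `M = D A` take `P D⁻¹` in
place of `P`: it is again positive diagonal and yields the same Lyapunov matrix `P A + A* P`. For
`M = A + D` keep `P`: the Lyapunov matrix gains the positive semidefinite diagonal term
`P D + D* P`.
-/

open Matrix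

open scoped ComplexOrder

namespace PosDefQ

theorem posDef_s15 {n : ℕ} {W : Matrix (Fin n) (Fin n) ℝ} (hW : PosDefQ W) (hsymm : W.IsSymm) :
    W.PosDef :=
  .of_dotProduct_mulVec_pos (isHermitian_iff_isSymm.2 hsymm) fun x hx ↦ by
    simpa only [star_trivial] using hW x hx

end PosDefQ

variable {𝕜 ι : Type*} [RCLike 𝕜]

open scoped MatrixOrder in
theorem posDef_map_algebraMap [Finite ι] {W : Matrix ι ι ℝ} (hW : W.PosDef) :
    (W.map (algebraMap ℝ 𝕜)).PosDef := by
  classical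
  have := Fintype.ofFinite ι
  obtain ⟨S, rfl⟩ := CStarAlgebra.nonneg_iff_eq_star_mul_self.mp hW.posSemidef.nonneg
  have hS : IsUnit (S.map (algebraMap ℝ 𝕜)) :=
    (isUnit_of_mul_isUnit_right hW.isUnit).map (algebraMap ℝ 𝕜).mapMatrix
  have hmap : (star S * S).map (algebraMap ℝ 𝕜) =
      (S.map (algebraMap ℝ 𝕜))ᴴ * S.map (algebraMap ℝ 𝕜) := by
    rw [star_eq_conjTranspose, Matrix.map_mul, conjTranspose_map _ fun x ↦ by simp]
  rw [hmap]
  exact .conjTranspose_mul_self _ (mulVec_injective_iff_isUnit.2 hS)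

variable [Fintype ι]

theorem re_pos_of_mem_spectrum_of_posSemidef [DecidableEq ι] {M P : Matrix ι ι 𝕜}
    (hP : P.PosSemidef) (hPM : (P * M + Mᴴ * P).PosDef) {z : 𝕜}
    (hz : z ∈ spectrum 𝕜 M) : 0 < RCLike.re z := by
  rw [← spectrum_toLin', ← Module.End.hasEigenvalue_iff_mem_spectrum] at hz
  obtain ⟨v, hv⟩ := hz.exists_hasEigenvector
  have hMv : M *ᵥ v = z • v := by rw [← toLin'_apply, hv.apply_eq_smul]
  have hform : star v ⬝ᵥ ((P * M + Mᴴ * P) *ᵥ v) =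
      ((2 * RCLike.re z : ℝ) : 𝕜) * (star v ⬝ᵥ (P *ᵥ v)) :=
    calc star v ⬝ᵥ ((P * M + Mᴴ * P) *ᵥ v)
        = star v ⬝ᵥ (P *ᵥ (M *ᵥ v)) + star (M *ᵥ v) ⬝ᵥ (P *ᵥ v) := by
          rw [add_mulVec, dotProduct_add, ← mulVec_mulVec, ← mulVec_mulVec, star_mulVec,
            ← dotProduct_mulVec]
      _ = (z + star z) * (star v ⬝ᵥ (P *ᵥ v)) := by
          rw [hMv, mulVec_smul, dotProduct_smul, star_smul, smul_dotProduct, smul_eq_mul,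
            smul_eq_mul, add_mul]
      _ = ((2 * RCLike.re z : ℝ) : 𝕜) * (star v ⬝ᵥ (P *ᵥ v)) := by
          rw [← starRingEnd_apply, RCLike.add_conj]
          push_cast
          rfl
  have hPv : 0 ≤ RCLike.re (star v ⬝ᵥ (P *ᵥ v)) :=
    (RCLike.nonneg_iff.1 (hP.dotProduct_mulVec_nonneg v)).1
  have hPMv : 0 < 2 * RCLike.re z * RCLike.re (star v ⬝ᵥ (P *ᵥ v)) := by
    rw [← RCLike.re_ofReal_mul, ← hform]
    exact (RCLike.pos_iff.1 (hPM.dotProduct_mulVec_pos hv.2)).1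
  linarith [pos_of_mul_pos_left hPMv hPv]

/-- Diagonal stability of a real or complex matrix `A`: the Lyapunov inequality `P A + Aᴴ P > 0` has
a positive diagonal solution `P`. The order on `𝕜` is that of `ComplexOrder`, so `0 < p i` forces
`p i` to be real. -/
def IsDiagonallyStable [DecidableEq ι] (A : Matrix ι ι 𝕜) : Prop :=
  ∃ p : ι → 𝕜, (∀ i, 0 < p i) ∧ (diagonal p * A + Aᴴ * diagonal p).PosDef

theorem isDiagonallyStable_of_exists_posDefQ {n : ℕ} {A : Matrix (Fin n) (Fin n) ℝ}
    (hA : ∃ p : Fin n → ℝ, (∀ i, 0 < p i) ∧ PosDefQ (diagonal p * A + Aᵀ * diagonal p)) :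
    IsDiagonallyStable A := by
  obtain ⟨p, hp, hPA⟩ := hA
  have hsymm : (diagonal p * A + Aᵀ * diagonal p).IsSymm := by
    simp only [IsSymm, transpose_add, transpose_mul, transpose_transpose, diagonal_transpose,
      add_comm]
  exact ⟨p, hp, by simpa only [conjTranspose_eq_transpose_of_trivial] using hPA.posDef_s15 hsymm⟩

namespace IsDiagonallyStable

variable [DecidableEq ι]

theorem map_algebraMap {A : Matrix ι ι ℝ} (hA : IsDiagonallyStable A) :
    IsDiagonallyStable (A.map (algebraMap ℝ 𝕜)) := by
  obtain ⟨p, hp, hPA⟩ := hA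
  refine ⟨fun i ↦ algebraMap ℝ 𝕜 (p i), fun i ↦ RCLike.ofReal_pos.2 (hp i), ?_⟩
  have hmap := posDef_map_algebraMap (𝕜 := 𝕜) hPA
  rwa [Matrix.map_add _ (map_add _), Matrix.map_mul, Matrix.map_mul, diagonal_map (map_zero _),
    conjTranspose_map _ fun x ↦ by simp] at hmap

variable {A : Matrix ι ι 𝕜} {d : ι → 𝕜}

theorem re_pos_of_mem_spectrum (hA : IsDiagonallyStable A) {z : 𝕜} (hz : z ∈ spectrum 𝕜 A) :
    0 < RCLike.re z :=
  have ⟨_, hp, hPA⟩ := hA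
  re_pos_of_mem_spectrum_of_posSemidef (.diagonal fun i ↦ (hp i).le) hPA hz

theorem diagonal_mul (hA : IsDiagonallyStable A) (hd : ∀ i, 0 < d i) :
    IsDiagonallyStable (diagonal d * A) := by
  obtain ⟨p, hp, hPA⟩ := hA
  refine ⟨fun i ↦ p i / d i, fun i ↦ div_pos (hp i) (hd i), ?_⟩
  have hstar : star d = d := funext fun i ↦ (IsSelfAdjoint.of_nonneg (hd i).le).star_eq
  have hcancel (i : ι) : p i / d i * d i = p i := div_mul_cancel₀ _ (hd i).ne'
  have hcancel' (i : ι) : d i * (p i / d i) = p i := mul_div_cancel₀ _ (hd i).ne'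
  simpa only [conjTranspose_mul, diagonal_conjTranspose, hstar, ← Matrix.mul_assoc,
    diagonal_mul_diagonal, Matrix.mul_assoc Aᴴ, hcancel, hcancel'] using hPA

theorem add_diagonal (hA : IsDiagonallyStable A) (hd : ∀ i, 0 ≤ RCLike.re (d i)) :
    IsDiagonallyStable (A + diagonal d) := by
  obtain ⟨p, hp, hPA⟩ := hA
  refine ⟨p, hp, ?_⟩
  have hPD : diagonal p * diagonal d + (diagonal d)ᴴ * diagonal p =
      diagonal fun i ↦ p i * (2 * RCLike.re (d i) : ℝ) := by
    rw [diagonal_conjTranspose, diagonal_mul_diagonal, diagonal_mul_diagonal, diagonal_add]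
    congr! 2 with i
    rw [Pi.star_apply, mul_comm (star _), ← mul_add, ← starRingEnd_apply, RCLike.add_conj]
    push_cast
    rfl
  have hnonneg : (diagonal fun i ↦ p i * ((2 * RCLike.re (d i) : ℝ) : 𝕜)).PosSemidef :=
    .diagonal fun i ↦
      mul_nonneg (hp i).le (RCLike.ofReal_nonneg.2 (mul_nonneg zero_le_two (hd i)))
  have hsum : diagonal p * (A + diagonal d) + (A + diagonal d)ᴴ * diagonal p =
      (diagonal p * A + Aᴴ * diagonal p) +
        (diagonal p * diagonal d + (diagonal d)ᴴ * diagonal p) := by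
    rw [conjTranspose_add, Matrix.mul_add, Matrix.add_mul, add_add_add_comm]
  rw [hsum, hPD]
  exact hPA.add_posSemidef hnonneg

end IsDiagonallyStable

theorem stmt15_general [DecidableEq ι] {A : Matrix ι ι 𝕜} (hA : IsDiagonallyStable A) :
    (∀ d : ι → 𝕜, (∀ i, 0 < d i) → ∀ z ∈ spectrum 𝕜 (diagonal d * A), 0 < RCLike.re z) ∧
      ∀ d : ι → 𝕜, (∀ i, 0 ≤ RCLike.re (d i)) →
        ∀ z ∈ spectrum 𝕜 (A + diagonal d), 0 < RCLike.re z :=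
  ⟨fun _ hd _ ↦ (hA.diagonal_mul hd).re_pos_of_mem_spectrum,
    fun _ hd _ ↦ (hA.add_diagonal hd).re_pos_of_mem_spectrum⟩

theorem spec_diagonal_mul [DecidableEq ι] (d : ι → ℝ) (A : Matrix ι ι ℝ) :
    spec (diagonal d * A) =
      spectrum ℂ (diagonal (fun i ↦ algebraMap ℝ ℂ (d i)) * A.map (algebraMap ℝ ℂ)) := by
  rw [← diagonal_map (f := algebraMap ℝ ℂ) (map_zero _), ← Matrix.map_mul]
  rfl

theorem spec_add_diagonal [DecidableEq ι] (A : Matrix ι ι ℝ) (d : ι → ℝ) :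
    spec (A + diagonal d) =
      spectrum ℂ (A.map (algebraMap ℝ ℂ) + diagonal fun i ↦ algebraMap ℝ ℂ (d i)) := by
  rw [← diagonal_map (f := algebraMap ℝ ℂ) (map_zero _), ← Matrix.map_add _ (map_add _)]
  rfl

theorem stmt15 {n : ℕ} (A : Matrix (Fin n) (Fin n) ℝ)
    (hds : ∃ p : Fin n → ℝ, (∀ i, 0 < p i) ∧
      PosDefQ ((Matrix.diagonal p) * A + Aᵀ * (Matrix.diagonal p))) :
    ∀ d : Fin n → ℝ, (∀ i, 0 < d i) →
      PosStable ((Matrix.diagonal d) * A) ∧ PosStable (A + Matrix.diagonal d) := by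
  have h := stmt15_general ((isDiagonallyStable_of_exists_posDefQ hds).map_algebraMap (𝕜 := ℂ))
  intro d hd
  rw [PosStable, PosStable, spec_diagonal_mul, spec_add_diagonal]
  exact ⟨h.1 _ fun i ↦ RCLike.ofReal_pos.2 (hd i), h.2 _ fun i ↦ (hd i).le⟩
end
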